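/- arXiv:2601.03491 — 12 statements merged into one kernel-verified Lean document; each statement's English description precedes it below -/
import Mathlib

section
/- Let M be a positive integer and define the sequence (α_j)_{j≥2} by α_2 = ⌊M/2⌋ and α_{j+1} = ⌊(M + α_j)/2⌋ for j ≥ 2. For each j ≥ 2, write M = 2^(j-1)·Q_j + N_j with integers Q_j ≥ 0 and 0 ≤ N_j ≤ 2^(j-1) - 1 (i.e., Q_j = ⌊M/2^(j-1)⌋ and N_j = M mod 2^(j-1)). Then for every j ≥ 2, α_j = (2^(j-1) - 1)·Q_j + 0 if N_j ≤ 1, and α_j = (2^(j-1) - 1)·Q_j + (N_j - 1) if N_j ≥ 2. -/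
/-!
The deficits `β j = M - α j` satisfy `β 2 = ⌈M / 2⌉` and `β (j + 1) = ⌈β j / 2⌉`, because
subtracting from a multiple of `2` turns the floor into a ceiling. Iterated ceiling divisions
compose, so `β j = ⌈M / 2 ^ (j - 1)⌉`, and the formula for `α j = M - β j` follows on dividing `M`
by `2 ^ (j - 1)` with remainder.
-/

section CeilDiv

variable {α β : Type*} [Semiring α] [PartialOrder α] [PosMulStrictMono α] [AddCommMonoid β]
  [PartialOrder β] [MulActionWithZero α β] [CeilDiv α β] {a b : α}

theorem ceilDiv_ceilDiv (ha : 0 < a) (hb : 0 < b) (c : β) : c ⌈/⌉ a ⌈/⌉ b = c ⌈/⌉ (a * b) :=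
  eq_of_forall_ge_iff fun x => by
    rw [ceilDiv_le_iff_le_smul hb, ceilDiv_le_iff_le_smul ha,
      ceilDiv_le_iff_le_smul (mul_pos ha hb), mul_smul]

end CeilDiv

theorem div_add_ceilDiv_of_add_eq_mul {d m x y : ℕ} (hd : 0 < d) (h : x + y = d * m) :
    x / d + y ⌈/⌉ d = m := by
  have hfloor : d * (x / d) ≤ x := Nat.mul_div_le x d
  have hceil : y ≤ d * (y ⌈/⌉ d) := le_smul_ceilDiv hd
  apply le_antisymm
  · have hle : x / d ≤ m := Nat.div_le_of_le_mul (h ▸ Nat.le_add_right x y)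
    rw [← Nat.le_sub_iff_add_le' hle, ceilDiv_le_iff_le_mul hd, Nat.mul_sub]
    omega
  · rw [← Nat.sub_le_iff_le_add, Nat.le_div_iff_mul_le hd, mul_comm, Nat.mul_sub]
    omega

theorem mul_add_ceilDiv {d : ℕ} (hd : 0 < d) (q r : ℕ) : (d * q + r) ⌈/⌉ d = q + r ⌈/⌉ d := by
  rw [Nat.ceilDiv_eq_add_pred_div, Nat.ceilDiv_eq_add_pred_div, add_assoc,
    Nat.add_sub_assoc (by omega), Nat.mul_add_div hd]

theorem sub_one_add_ceilDiv_of_le {d r : ℕ} (hr : r ≤ d) : r - 1 + r ⌈/⌉ d = r := by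
  obtain rfl | hpos := Nat.eq_zero_or_pos r
  · rw [zero_ceilDiv, add_zero, Nat.zero_sub]
  · have hone : r ⌈/⌉ d = 1 := by
      rw [Nat.ceilDiv_eq_add_pred_div]
      exact Nat.div_eq_of_lt_le (by omega) (by omega)
    rw [hone, Nat.sub_add_cancel hpos]

theorem sub_one_mul_div_add_mod_sub_one_add_ceilDiv {d : ℕ} (hd : 0 < d) (m : ℕ) :
    (d - 1) * (m / d) + (m % d - 1) + m ⌈/⌉ d = m := by
  have hceil : m ⌈/⌉ d = m / d + m % d ⌈/⌉ d := by
    rw [← mul_add_ceilDiv hd, Nat.div_add_mod]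
  calc
    (d - 1) * (m / d) + (m % d - 1) + m ⌈/⌉ d
        = (d - 1 + 1) * (m / d) + (m % d - 1 + m % d ⌈/⌉ d) := by rw [hceil]; ring
    _ = d * (m / d) + m % d := by
      rw [Nat.sub_add_cancel hd, sub_one_add_ceilDiv_of_le (Nat.mod_lt m hd).le]
    _ = m := Nat.div_add_mod m d

theorem add_ceilDiv_pow_eq_of_rec {d m c : ℕ} {a : ℕ → ℕ} (h0 : a 0 + c = m)
    (hrec : ∀ n, a (n + 1) = (d * m + a n) / (d + 1)) (n : ℕ) :
    a n + c ⌈/⌉ (d + 1) ^ n = m := by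
  induction n with
  | zero => rwa [pow_zero, ceilDiv_one]
  | succ n ih =>
    rw [hrec, pow_succ, ← ceilDiv_ceilDiv (by positivity) d.succ_pos]
    refine div_add_ceilDiv_of_add_eq_mul d.succ_pos ?_
    rw [add_assoc, ih, Nat.succ_mul]

/-- Let `M ≥ 1` and let `(α_j)_{j ≥ 2}` satisfy `α 2 = ⌊M/2⌋` and
`α (j+1) = ⌊(M + α j)/2⌋` for `j ≥ 2`.  Writing `M = 2^(j-1)·Q_j + N_j` with
`Q_j = ⌊M / 2^(j-1)⌋` and `N_j = M mod 2^(j-1)`, we have, for every `j ≥ 2`,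
`α j = (2^(j-1) - 1)·Q_j` if `N_j ≤ 1`, and `α j = (2^(j-1) - 1)·Q_j + (N_j - 1)`
otherwise. -/
theorem stmt_3 (M : ℕ) (hM : 1 ≤ M) (α : ℕ → ℕ)
    (h2 : α 2 = M / 2) (hrec : ∀ j, 2 ≤ j → α (j + 1) = (M + α j) / 2) :
    ∀ j, 2 ≤ j →
      α j = (2 ^ (j - 1) - 1) * (M / 2 ^ (j - 1)) +
        (if M % 2 ^ (j - 1) ≤ 1 then 0 else M % 2 ^ (j - 1) - 1) := by
  intro j hj
  obtain ⟨k, rfl⟩ := Nat.exists_eq_add_of_le' hj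
  have hbase : α (0 + 2) + M ⌈/⌉ 2 = M := by
    rw [zero_add, h2]
    exact div_add_ceilDiv_of_add_eq_mul two_pos (two_mul M).symm
  have hdeficit : α (k + 2) + M ⌈/⌉ 2 ^ (k + 1) = M := by
    rw [pow_succ', ← ceilDiv_ceilDiv two_pos (by positivity)]
    refine add_ceilDiv_pow_eq_of_rec (d := 1) (a := fun n => α (n + 2)) hbase (fun n => ?_) k
    rw [one_mul]
    exact hrec (n + 2) (Nat.le_add_left 2 n)
  have hite (r : ℕ) : (if r ≤ 1 then 0 else r - 1) = r - 1 := by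
    split_ifs <;> omega
  rw [hite, show k + 2 - 1 = k + 1 from rfl]
  exact Nat.add_right_cancel <| hdeficit.trans
    (sub_one_mul_div_add_mod_sub_one_add_ceilDiv (Nat.two_pow_pos _) M).symm
end

section
/- Let m ≥ 2 be an integer that is not a power of 2, and let e ≥ 2 be an integer satisfying 2^(⌈log₂ m⌉ + e - 1) - (2^e - 1)·m + (2^(e-1) - 1) < 0. Define the sequence (α_j)_{j≥2} by α_2 = ⌊m/2⌋ and α_{j+1} = ⌊(m + α_j)/2⌋. Then α_e ≥ 2^(⌈log₂ m⌉) - m + 1. -/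
/-!
Nested floor divisions collapse, so the sequence has the closed form
`α e = ⌊m * (2^(e-1) - 1) / 2^(e-1)⌋`. Clearing this single denominator shows that the numerical
hypothesis on `m` and `e` is the lower bound on `α e` in disguise.
-/

theorem iterate_add_ediv (m a : ℤ) {b : ℤ} (hb : 0 < b) (k : ℕ) :
    (fun x ↦ (m + x) / b)^[k] a = (a + m * ∑ i ∈ Finset.range k, b ^ i) / b ^ k := by
  induction k with
  | zero => simp
  | succ k ih =>
    have hbk : 0 < b ^ k := pow_pos hb k
    rw [Function.iterate_succ_apply', ih]
    calc (m + (a + m * ∑ i ∈ Finset.range k, b ^ i) / b ^ k) / b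
        = (m * b ^ k + (a + m * ∑ i ∈ Finset.range k, b ^ i)) / b ^ k / b := by
          rw [Int.add_ediv_of_dvd_left (dvd_mul_left _ m), Int.mul_ediv_cancel m hbk.ne']
      _ = (a + m * ∑ i ∈ Finset.range (k + 1), b ^ i) / b ^ (k + 1) := by
          rw [Int.ediv_ediv_of_nonneg hbk.le, ← pow_succ, Finset.sum_range_succ]
          congr 1
          ring

theorem iterate_add_ediv_two (m a : ℤ) (k : ℕ) :
    (fun x ↦ (m + x) / 2)^[k] a = (a + m * (2 ^ k - 1)) / 2 ^ k := by
  have hgeom : ∑ i ∈ Finset.range k, (2 : ℤ) ^ i = 2 ^ k - 1 := by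
    simpa using geom_sum_mul (2 : ℤ) k
  rw [iterate_add_ediv m a two_pos, hgeom]

theorem eq_ediv_two_pow_of_recurrence {m : ℤ} {α : ℕ → ℤ} (h2 : α 2 = m / 2)
    (hrec : ∀ j, 2 ≤ j → α (j + 1) = (m + α j) / 2) {e : ℕ} (he : 2 ≤ e) :
    α e = m * (2 ^ (e - 1) - 1) / 2 ^ (e - 1) := by
  rw [← zero_add (m * _), ← iterate_add_ediv_two]
  -- The iteration starts at `0`, which plays the role of a term `α 1`.
  induction e, he using Nat.le_induction with
  | base => simp [h2]
  | succ j hj ih =>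
    obtain ⟨i, rfl⟩ : ∃ i, j = i + 1 := ⟨j - 1, by omega⟩
    rw [hrec _ hj, ih, Nat.add_sub_cancel, Nat.add_sub_cancel, Function.iterate_succ_apply']

theorem stmt_5_general {m : ℤ} {α : ℕ → ℤ} (h2 : α 2 = m / 2)
    (hrec : ∀ j, 2 ≤ j → α (j + 1) = (m + α j) / 2) {e : ℕ} (he : 2 ≤ e) (N : ℤ) :
    N - m + 1 ≤ α e ↔ N * 2 ^ (e - 1) - (2 ^ e - 1) * m + (2 ^ (e - 1) - 1) < 0 := by
  have hpow : (2 : ℤ) ^ e = 2 * 2 ^ (e - 1) := (mul_pow_sub_one (by omega) 2).symm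
  have hdiff : N * 2 ^ (e - 1) - (2 ^ e - 1) * m + (2 ^ (e - 1) - 1)
      = (N - m + 1) * 2 ^ (e - 1) - 1 - m * (2 ^ (e - 1) - 1) := by
    rw [hpow]
    ring
  rw [eq_ediv_two_pow_of_recurrence h2 hrec he, Int.le_ediv_iff_mul_le (by positivity), hdiff,
    sub_neg, Int.sub_one_lt_iff]

/-- Let `m ≥ 2` be an integer that is not a power of `2`, and let `e ≥ 2` satisfy
`2^(⌈log₂ m⌉ + e - 1) - (2^e - 1)·m + (2^(e-1) - 1) < 0`.  If `(α_j)_{j ≥ 2}` is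
the sequence with `α 2 = ⌊m/2⌋` and `α (j+1) = ⌊(m + α j)/2⌋`, then
`α e ≥ 2^(⌈log₂ m⌉) - m + 1`. -/
theorem stmt_5 (m : ℕ) (hm : 2 ≤ m) (hpow : ¬ ∃ k : ℕ, m = 2 ^ k)
    (e : ℕ) (he : 2 ≤ e)
    (hineq : (2 : ℤ) ^ (Nat.clog 2 m + e - 1) - (2 ^ e - 1) * (m : ℤ)
      + (2 ^ (e - 1) - 1) < 0)
    (α : ℕ → ℕ) (h2 : α 2 = m / 2) (hrec : ∀ j, 2 ≤ j → α (j + 1) = (m + α j) / 2) :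
    (α e : ℤ) ≥ 2 ^ (Nat.clog 2 m) - (m : ℤ) + 1 := by
  rw [Nat.add_sub_assoc (by omega), pow_add] at hineq
  exact (stmt_5_general (α := (α ·)) (by exact_mod_cast h2) (by exact_mod_cast hrec) he _).mpr hineq
end

section
/- Let n, m, e, s be integers with n ≥ 1, m ≥ 1, e ≥ 1, s ≥ 1, and set q := 2^(e+s-1). Then there exist no nonnegative integers A, B, C, D with A + B + C + D = q - 1 such that q divides 2A + B + C + 1, q divides A + nB + mC + 2^(e-1) - (2^e - 1)·m, and q divides C + 2D + 1. -/
/-! The divisibilities for `x` and `z` leave only the monomials `(x²y)^A (xy^m z)^C (z²)^A` with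
`2A + C + 1 = q`. With `p = 2^(e-1)`, the remaining exponent is then `(1 - 2m)(A + p)` modulo `q`.
Here `1 - 2m` is prime to `q` and `0 < A + p < q`, so `q` cannot divide it. -/

theorem eq_and_eq_of_dvd_of_add_le_two_mul {q a b : ℤ} (ha : 0 < a) (hb : 0 < b) (hqa : q ∣ a)
    (hqb : q ∣ b) (hab : a + b ≤ 2 * q) : a = q ∧ b = q := by
  have hqa_le : q ≤ a := Int.le_of_dvd ha hqa
  have hqb_le : q ≤ b := Int.le_of_dvd hb hqb
  constructor <;> linarith

theorem eq_zero_and_two_mul_add_add_one_eq_of_dvd {q A B C D : ℕ} (hsum : A + B + C + D + 1 = q)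
    (hx : (q : ℤ) ∣ 2 * (A : ℤ) + B + C + 1) (hz : (q : ℤ) ∣ (C : ℤ) + 2 * D + 1) :
    B = 0 ∧ 2 * A + C + 1 = q := by
  -- The two multiples of `q` add up to `2 * q - B`.
  obtain ⟨hx_eq, hz_eq⟩ :=
    eq_and_eq_of_dvd_of_add_le_two_mul (by positivity) (by positivity) hx hz (by omega)
  omega

theorem dvd_iff_dvd_one_sub_two_mul_mul_add {R : Type*} [CommRing R] (m p A C : R) :
    2 * A + C + 1 ∣ A + m * C + p - (2 * p - 1) * m ↔
      2 * A + C + 1 ∣ (1 - 2 * m) * (A + p) := by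
  have hsplit : A + m * C + p - (2 * p - 1) * m =
      (1 - 2 * m) * (A + p) + (2 * A + C + 1) * m := by ring
  rw [hsplit, dvd_add_left (dvd_mul_right _ _)]

theorem stmt_7_general (n m : ℤ) {q p : ℕ} (hp : 0 < p) (hpq : 2 * p ≤ q)
    (hcop : IsCoprime (q : ℤ) (1 - 2 * m)) :
    ¬ ∃ A B C D : ℕ,
      A + B + C + D = q - 1 ∧
      (q : ℤ) ∣ 2 * (A : ℤ) + B + C + 1 ∧
      (q : ℤ) ∣ (A : ℤ) + n * B + m * C + p - (2 * p - 1) * m ∧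
      (q : ℤ) ∣ (C : ℤ) + 2 * D + 1 := by
  rintro ⟨A, B, C, D, hsum, hx, hy, hz⟩
  obtain ⟨rfl, hAC⟩ := eq_zero_and_two_mul_add_add_one_eq_of_dvd (by omega) hx hz
  have hmul : (q : ℤ) ∣ (1 - 2 * m) * (A + p) := by
    simpa [← hAC, dvd_iff_dvd_one_sub_two_mul_mul_add] using hy
  have hle : (q : ℤ) ≤ A + p := Int.le_of_dvd (by positivity) (hcop.dvd_of_dvd_mul_left hmul)
  omega

/-- Let `n, m, e, s ≥ 1` and `q := 2^(e+s-1)`.  There are no nonnegative integers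
`A, B, C, D` with `A + B + C + D = q - 1` such that `q` divides `2A + B + C + 1`,
`q` divides `A + nB + mC + 2^(e-1) - (2^e - 1)·m`, and `q` divides `C + 2D + 1`. -/
theorem stmt_7 (n m e s : ℕ) (hn : 1 ≤ n) (hm : 1 ≤ m) (he : 1 ≤ e) (hs : 1 ≤ s) :
    ¬ ∃ A B C D : ℕ,
      A + B + C + D = 2 ^ (e + s - 1) - 1 ∧
      (2 : ℤ) ^ (e + s - 1) ∣ 2 * (A : ℤ) + B + C + 1 ∧
      (2 : ℤ) ^ (e + s - 1) ∣
        (A : ℤ) + n * B + m * C + 2 ^ (e - 1) - (2 ^ e - 1) * m ∧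
      (2 : ℤ) ^ (e + s - 1) ∣ (C : ℤ) + 2 * D + 1 := by
  have hpq : 2 * 2 ^ (e - 1) ≤ 2 ^ (e + s - 1) := by
    rw [mul_pow_sub_one (by omega)]
    exact Nat.pow_le_pow_right two_pos (by omega)
  have hcop : IsCoprime ((2 : ℤ) ^ (e + s - 1)) (1 - 2 * m) :=
    (Int.isCoprime_two_left.mpr (odd_one.sub_even (even_two_mul _))).pow_left
  simpa [mul_pow_sub_one (show e ≠ 0 by omega)] using
    stmt_7_general n m (by positivity) hpq (mod_cast hcop)
end

section
/- Let n, m, e, h be integers with n ≥ 1, m ≥ 1, e ≥ 1, h ≥ 2, and set q := 2^(e+h-1). Then nonnegative integers A, B, C, D satisfy A + B + C + D = q - 1 together with: q divides 2A + B + C + 1, q divides A + nB + mC + 2^(e+h-2) - (2^e - 1)·m + 2^(e-1), and q divides C + 2D + 1, if and only if (A, B, C, D) = (2^(e+h-2) - 2^(e-1), 0, 2^e - 1, 2^(e+h-2) - 2^(e-1)). -/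
/-!
Write `q = 2 * r`. Both `2 * A + B + C + 1` and `C + 2 * D + 1` are positive multiples of `q`, and
`A + B + C + D = q - 1` makes them smaller than `2 * q`, so both equal `q`. Adding them gives
`B = 0`, and what remains is the family `(A, B, C, D) = (r - c, 0, 2 * c - 1, r - c)` with
`0 < c ≤ r`. On this family the second congruence reads `q ∣ (2 * m - 1) * (c - s)`, where
`2 * s - 1` is the target value of `C`. As `2 * m - 1` is prime to `q` and `|c - s| < q`, this
forces `c = s`. The theorem is the case `r = 2 ^ (e + h - 2)`, `s = 2 ^ (e - 1)`.
-/

theorem isCoprime_two_two_mul_sub_one (m : ℤ) : IsCoprime 2 (2 * m - 1) :=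
  ⟨m, -1, by ring⟩

theorem first_and_third_dvd_iff_exists {r : ℕ} (hr : 0 < r) {A B C D : ℕ}
    (hsum : A + B + C + D = 2 * r - 1) :
    (2 * r ∣ 2 * A + B + C + 1 ∧ 2 * r ∣ C + 2 * D + 1) ↔
      ∃ c, 0 < c ∧ c ≤ r ∧ A = r - c ∧ B = 0 ∧ C = 2 * c - 1 ∧ D = r - c := by
  constructor
  · rintro ⟨hx, hz⟩
    have hx_eq : 2 * A + B + C + 1 = 2 * r :=
      Nat.eq_of_dvd_of_lt_two_mul (by omega) hx (by omega)
    have hz_eq : C + 2 * D + 1 = 2 * r :=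
      Nat.eq_of_dvd_of_lt_two_mul (by omega) hz (by omega)
    exact ⟨r - A, by omega⟩
  · rintro ⟨c, _, _, rfl, rfl, rfl, rfl⟩
    exact ⟨dvd_of_eq (by omega), dvd_of_eq (by omega)⟩

theorem dvd_mul_sub_iff_eq {q k a b : ℤ} (hqk : IsCoprime q k) (hab : |a - b| < q) :
    q ∣ k * (a - b) ↔ a = b := by
  constructor
  · intro hdvd
    exact sub_eq_zero.1 (Int.eq_zero_of_abs_lt_dvd (hqk.dvd_of_dvd_mul_left hdvd) hab)
  · rintro rfl
    simp

theorem second_dvd_iff_eq {r s c m : ℤ} (hrm : IsCoprime r (2 * m - 1))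
    (hcs : |c - s| < 2 * r) :
    2 * r ∣ (r - c) + m * (2 * c - 1) + r - (2 * s - 1) * m + s ↔ c = s := by
  have hcop : IsCoprime (2 * r) (2 * m - 1) := (isCoprime_two_two_mul_sub_one m).mul_left hrm
  have hexp : (r - c) + m * (2 * c - 1) + r - (2 * s - 1) * m + s =
      (2 * m - 1) * (c - s) + 2 * r := by ring
  rw [hexp, dvd_add_self_right, dvd_mul_sub_iff_eq hcop hcs]

theorem stmt_8_general {r s : ℕ} (hs : 0 < s) (hsr : s ≤ r) (n : ℤ) {m : ℤ}
    (hrm : IsCoprime (r : ℤ) (2 * m - 1)) (A B C D : ℕ) :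
    (A + B + C + D = 2 * r - 1 ∧
      (2 * r : ℤ) ∣ 2 * (A : ℤ) + B + C + 1 ∧
      (2 * r : ℤ) ∣ (A : ℤ) + n * B + m * C + r - (2 * s - 1) * m + s ∧
      (2 * r : ℤ) ∣ (C : ℤ) + 2 * D + 1) ↔
    (A = r - s ∧ B = 0 ∧ C = 2 * s - 1 ∧ D = r - s) := by
  have second_iff {c : ℕ} (hc : 0 < c) (hcr : c ≤ r) :
      (2 * r : ℤ) ∣ ((r - c : ℕ) : ℤ) + n * (0 : ℕ) + m * ((2 * c - 1 : ℕ) : ℤ) + r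
        - (2 * s - 1) * m + s ↔ c = s := by
    have hcs : |(c : ℤ) - s| < 2 * r := by rw [abs_lt]; omega
    have hC : ((2 * c - 1 : ℕ) : ℤ) = 2 * c - 1 := by omega
    rw [Nat.cast_sub hcr, hC, Nat.cast_zero, mul_zero, add_zero,
      second_dvd_iff_eq hrm hcs, Nat.cast_inj]
  constructor
  · rintro ⟨hsum, hx, hy, hz⟩
    obtain ⟨c, hc, hcr, rfl, rfl, rfl, rfl⟩ :=
      (first_and_third_dvd_iff_exists (hs.trans_le hsr) hsum).1
        ⟨mod_cast hx, mod_cast hz⟩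
    obtain rfl := (second_iff hc hcr).1 hy
    exact ⟨rfl, rfl, rfl, rfl⟩
  · rintro ⟨rfl, rfl, rfl, rfl⟩
    have hsum : r - s + 0 + (2 * s - 1) + (r - s) = 2 * r - 1 := by omega
    obtain ⟨hx, hz⟩ := (first_and_third_dvd_iff_exists (hs.trans_le hsr) hsum).2
      ⟨s, hs, hsr, rfl, rfl, rfl, rfl⟩
    exact ⟨hsum, mod_cast hx, (second_iff hs hsr).2 rfl, mod_cast hz⟩

/-- Let `n, m, e ≥ 1`, `h ≥ 2` and `q := 2^(e+h-1)`.  Nonnegative integers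
`A, B, C, D` satisfy `A + B + C + D = q - 1`, `q ∣ 2A + B + C + 1`,
`q ∣ A + nB + mC + 2^(e+h-2) - (2^e - 1)·m + 2^(e-1)`, and `q ∣ C + 2D + 1`
if and only if `(A, B, C, D) = (2^(e+h-2) - 2^(e-1), 0, 2^e - 1, 2^(e+h-2) - 2^(e-1))`. -/
theorem stmt_8 (n m e h : ℕ) (hn : 1 ≤ n) (hm : 1 ≤ m) (he : 1 ≤ e) (hh : 2 ≤ h)
    (A B C D : ℕ) :
    (A + B + C + D = 2 ^ (e + h - 1) - 1 ∧
      (2 : ℤ) ^ (e + h - 1) ∣ 2 * (A : ℤ) + B + C + 1 ∧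
      (2 : ℤ) ^ (e + h - 1) ∣
        (A : ℤ) + n * B + m * C + 2 ^ (e + h - 2) - (2 ^ e - 1) * m + 2 ^ (e - 1) ∧
      (2 : ℤ) ^ (e + h - 1) ∣ (C : ℤ) + 2 * D + 1) ↔
    (A = 2 ^ (e + h - 2) - 2 ^ (e - 1) ∧ B = 0 ∧ C = 2 ^ e - 1 ∧
      D = 2 ^ (e + h - 2) - 2 ^ (e - 1)) := by
  have hq {R : Type} [CommSemiring R] : (2 : R) * 2 ^ (e + h - 2) = 2 ^ (e + h - 1) :=
    mul_pow_sub_one (show e + h - 1 ≠ 0 by omega) 2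
  have hP {R : Type} [CommSemiring R] : (2 : R) * 2 ^ (e - 1) = 2 ^ e :=
    mul_pow_sub_one (by omega) 2
  simpa only [Nat.cast_pow, Nat.cast_ofNat, hq, hP] using
    stmt_8_general (r := 2 ^ (e + h - 2)) (s := 2 ^ (e - 1)) (by positivity)
      (Nat.pow_le_pow_right two_pos (by omega)) n
      (by exact_mod_cast (isCoprime_two_two_mul_sub_one m).pow_left) A B C D
end

section
/- Let e ≥ 1 and h ≥ 2 be integers. Then the 2-adic valuation of the product of binomial coefficients C(2^(e+h-1) - 1, 2^e - 1) · C(2^e·(2^(h-1) - 1), 2^(e-1)·(2^(h-1) - 1)) equals h - 1. -/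
/-!
A binomial coefficient `C(p ^ n - 1, k)` with `k < p ^ n` is prime to `p`, because Pascal's rule
makes consecutive ones opposite modulo `p`. So the first factor contributes nothing. The second
factor is the central binomial coefficient of `m = 2 ^ (e - 1) * (2 ^ (h - 1) - 1)`, whose `2`-adic
valuation is, by Kummer's theorem, the number of ones in the binary expansion of `m`. That expansion
consists of `h - 1` ones followed by `e - 1` zeros.
-/

theorem digits_base_pow_sub_one {b : ℕ} (hb : 1 < b) (n : ℕ) :
    Nat.digits b (b ^ n - 1) = List.replicate n (b - 1) := by
  induction n with
  | zero => simp
  | succ n ih =>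
    have hsplit : b ^ (n + 1) - 1 = (b - 1) + b * (b ^ n - 1) := by
      have : b ≤ b * b ^ n := Nat.le_mul_of_pos_right b (by positivity)
      rw [pow_succ', Nat.mul_sub, mul_one]
      lia
    rw [hsplit, Nat.digits_add b hb _ _ (by lia) (.inl (by lia)), ih, List.replicate_succ]

theorem sum_digits_base_pow_mul {b : ℕ} (hb : 1 < b) (k m : ℕ) :
    (Nat.digits b (b ^ k * m)).sum = (Nat.digits b m).sum := by
  rcases m.eq_zero_or_pos with rfl | hm
  · rw [mul_zero]
  · rw [Nat.digits_base_pow_mul hb hm, List.sum_append, List.sum_replicate, smul_zero, zero_add]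

theorem padicValNat_two_centralBinom (n : ℕ) :
    padicValNat 2 n.centralBinom = (Nat.digits 2 n).sum := by
  have kummer := sub_one_mul_padicValNat_choose_eq_sub_sum_digits' (p := 2) (k := n) (n := n)
  have hdouble : (Nat.digits 2 (2 * n)).sum = (Nat.digits 2 n).sum := by
    simpa only [pow_one] using sum_digits_base_pow_mul one_lt_two 1 n
  rw [← two_mul n, ← Nat.centralBinom_eq_two_mul_choose, hdouble] at kummer
  lia

theorem not_dvd_choose_prime_pow_sub_one {p n k : ℕ} (hp : p.Prime) (hk : k < p ^ n) :
    ¬ p ∣ (p ^ n - 1).choose k := by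
  induction k with
  | zero => simpa only [Nat.choose_zero_right, Nat.dvd_one] using hp.ne_one
  | succ k ih =>
    have pascal : (p ^ n).choose (k + 1) =
        (p ^ n - 1).choose k + (p ^ n - 1).choose (k + 1) := by
      rw [← Nat.choose_succ_succ', Nat.sub_add_cancel (by lia)]
    have hdvd : p ∣ (p ^ n).choose (k + 1) := hp.dvd_choose_pow k.succ_ne_zero hk.ne
    rw [pascal] at hdvd
    exact fun h ↦ ih (by lia) ((Nat.dvd_add_left h).mp hdvd)

/-- For integers `e ≥ 1` and `h ≥ 2`, the `2`-adic valuation of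
`C(2^(e+h-1) - 1, 2^e - 1) · C(2^e·(2^(h-1) - 1), 2^(e-1)·(2^(h-1) - 1))`
equals `h - 1`. -/
theorem stmt_9 (e h : ℕ) (he : 1 ≤ e) (hh : 2 ≤ h) :
    padicValNat 2
      (Nat.choose (2 ^ (e + h - 1) - 1) (2 ^ e - 1) *
        Nat.choose (2 ^ e * (2 ^ (h - 1) - 1)) (2 ^ (e - 1) * (2 ^ (h - 1) - 1)))
      = h - 1 := by
  set m := 2 ^ (e - 1) * (2 ^ (h - 1) - 1) with hm
  have hcentral : (2 ^ e * (2 ^ (h - 1) - 1)).choose m = m.centralBinom := by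
    rw [Nat.centralBinom_eq_two_mul_choose, hm, ← mul_assoc, mul_pow_sub_one (by lia)]
  have hlt : 2 ^ e - 1 < 2 ^ (e + h - 1) :=
    (Nat.sub_lt (by positivity) one_pos).trans_le (Nat.pow_le_pow_right two_pos (by lia))
  have hodd := not_dvd_choose_prime_pow_sub_one Nat.prime_two hlt
  have hne : (2 ^ (e + h - 1) - 1).choose (2 ^ e - 1) ≠ 0 := fun h0 ↦ hodd (h0 ▸ dvd_zero 2)
  calc
    _ = padicValNat 2 m.centralBinom := by
      rw [hcentral, padicValNat.mul hne m.centralBinom_ne_zero,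
        padicValNat.eq_zero_of_not_dvd hodd, zero_add]
    _ = (Nat.digits 2 (2 ^ (h - 1) - 1)).sum := by
      rw [padicValNat_two_centralBinom, hm, sum_digits_base_pow_mul one_lt_two]
    _ = h - 1 := by
      simp [digits_base_pow_sub_one]
end

section
/- Let e ≥ 1 and h ≥ 2 be integers. Then the 2-adic valuation of the product of binomial coefficients C(2^(e+h-1) - 1, 2^(e+h-2) - 1) · C(2^(e+h-2), 2^(e-1)) equals h - 1. -/
/-!
Binomial coefficients in row `p ^ n - 1` of Pascal's triangle are prime to `p`: in the absorption
identity `p ^ n * C(p ^ n - 1, k) = C(p ^ n, k + 1) * (k + 1)` the right side already has valuation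
`n`. Hence the first factor is odd, and the second, in row `2 ^ (e + h - 2)`, has valuation
`(e + h - 2) - (e - 1) = h - 1`.
-/

section

variable {p m n k : ℕ} [hp : Fact p.Prime]

theorem padicValNat_choose_prime_pow_add_padicValNat (hkn : k ≤ p ^ n) (hk : k ≠ 0) :
    padicValNat p ((p ^ n).choose k) + padicValNat p k = n := by
  simpa only [Nat.factorization_def _ hp.out] using
    Nat.factorization_choose_prime_pow_add_factorization hp.out hkn hk

theorem padicValNat_choose_prime_pow_prime_pow (hmn : m ≤ n) :
    padicValNat p ((p ^ n).choose (p ^ m)) = n - m := by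
  have valuations := padicValNat_choose_prime_pow_add_padicValNat
    (Nat.pow_le_pow_right hp.out.pos hmn) (pow_ne_zero m hp.out.ne_zero)
  rw [padicValNat.prime_pow] at valuations
  exact Nat.eq_sub_of_add_eq valuations

theorem padicValNat_choose_prime_pow_sub_one (hk : k < p ^ n) :
    padicValNat p ((p ^ n - 1).choose k) = 0 := by
  have prime_pow_ne_zero : p ^ n ≠ 0 := Nat.ne_zero_of_lt hk
  have absorption : p ^ n * (p ^ n - 1).choose k = (p ^ n).choose (k + 1) * (k + 1) := by
    simpa only [Nat.sub_one_add_one prime_pow_ne_zero] using Nat.add_one_mul_choose_eq (p ^ n - 1) k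
  have valuations : n + padicValNat p ((p ^ n - 1).choose k) = n :=
    calc
      n + padicValNat p ((p ^ n - 1).choose k)
          = padicValNat p (p ^ n * (p ^ n - 1).choose k) := by
        rw [padicValNat.mul prime_pow_ne_zero (Nat.choose_ne_zero (Nat.le_sub_one_of_lt hk)),
          padicValNat.prime_pow]
      _ = padicValNat p ((p ^ n).choose (k + 1)) + padicValNat p (k + 1) := by
        rw [absorption, padicValNat.mul (Nat.choose_ne_zero hk) k.succ_ne_zero]
      _ = n := padicValNat_choose_prime_pow_add_padicValNat hk k.succ_ne_zero
  exact Nat.add_eq_left.mp valuations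

end

/-- For integers `e ≥ 1` and `h ≥ 2`, the `2`-adic valuation of
`C(2^(e+h-1) - 1, 2^(e+h-2) - 1) · C(2^(e+h-2), 2^(e-1))` equals `h - 1`. -/
theorem stmt_10 (e h : ℕ) (he : 1 ≤ e) (hh : 2 ≤ h) :
    padicValNat 2
      (Nat.choose (2 ^ (e + h - 1) - 1) (2 ^ (e + h - 2) - 1) *
        Nat.choose (2 ^ (e + h - 2)) (2 ^ (e - 1)))
      = h - 1 := by
  have exponent_le : e - 1 ≤ e + h - 2 := by omega
  have pred_lt : 2 ^ (e + h - 2) - 1 < 2 ^ (e + h - 1) :=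
    (Nat.sub_le _ _).trans_lt (Nat.pow_lt_pow_right one_lt_two (by omega))
  have first_ne_zero := Nat.choose_ne_zero (Nat.le_sub_one_of_lt pred_lt)
  have second_ne_zero := Nat.choose_ne_zero (Nat.pow_le_pow_right two_pos exponent_le)
  rw [padicValNat.mul first_ne_zero second_ne_zero, padicValNat_choose_prime_pow_sub_one pred_lt,
    padicValNat_choose_prime_pow_prime_pow exponent_le]
  omega
end

section
/- Let n, m, e, s be integers with n ≥ 1, m ≥ 1, e ≥ 1, s ≥ 1, and set q := 2^(e+s-1). Then there exist no nonnegative integers A, B, C, D with A + B + C + D = q - 1 such that q divides 2A + B + C + 2^(e-1), q divides A + nB + mC + 2^(e-1) - n·2^(e-1), and q divides C + 2D + 2. -/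
/-!
Write `ε` for `2 ^ (e - 1)` and work modulo `q`. Since `2 * (A + B + C + D) ≡ -2`, the first and
third congruences add up to `B ≡ ε`. Eliminating `ε`, the first two congruences become the linear
system `2 * (A + B) + C ≡ 0`, `(A + B) + m * C ≡ 0`, whose determinant `2 * m - 1` is a unit modulo
`q`. So `q` divides `A + B`, which is at most `q - 1`; hence `B = 0` and `q ∣ ε`, which is absurd.
-/

section CommRing

variable {R : Type*} [CommRing R]

theorem dvd_of_isCoprime_det {q a b c d x y : R} (hdet : IsCoprime q (a * d - b * c))
    (h₁ : q ∣ a * x + b * y) (h₂ : q ∣ c * x + d * y) : q ∣ x := by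
  refine hdet.dvd_of_dvd_mul_left ?_
  calc q ∣ d * (a * x + b * y) + -b * (c * x + d * y) := h₁.linear_comb h₂ d (-b)
    _ = (a * d - b * c) * x := by ring

theorem isCoprime_pow_mul_sub_one (a m : R) (k : ℕ) : IsCoprime (a ^ k) (a * m - 1) :=
  IsCoprime.pow_left ⟨m, -1, by ring⟩

end CommRing

theorem stmt_11_general {q ε n m : ℤ} (hε : ¬ q ∣ ε) (hm : IsCoprime q (2 * m - 1)) :
    ¬ ∃ A B C D : ℕ,
      (A : ℤ) + B + C + D = q - 1 ∧
      q ∣ 2 * (A : ℤ) + B + C + ε ∧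
      q ∣ (A : ℤ) + n * B + m * C + ε - n * ε ∧
      q ∣ (C : ℤ) + 2 * D + 2 := by
  rintro ⟨A, B, C, D, hsum, hx, hy, hz⟩
  have hεB : q ∣ ε - B := by
    calc q ∣ (2 * (A : ℤ) + B + C + ε) + (C + 2 * D + 2) - 2 * q :=
          dvd_sub (dvd_add hx hz) (dvd_mul_left q 2)
      _ = ε - B := by linear_combination 2 * hsum
  have hx' : q ∣ 2 * ((A : ℤ) + B) + 1 * C := by
    calc q ∣ (2 * (A : ℤ) + B + C + ε) - (ε - B) := dvd_sub hx hεB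
      _ = 2 * (A + B) + 1 * C := by ring
  have hy' : q ∣ 1 * ((A : ℤ) + B) + m * C := by
    calc q ∣ ((A : ℤ) + n * B + m * C + ε - n * ε) - (1 - n) * (ε - B) :=
          dvd_sub hy (hεB.mul_left (1 - n))
      _ = 1 * (A + B) + m * C := by ring
  have hAB : q ∣ (A : ℤ) + B := dvd_of_isCoprime_det (by simpa only [one_mul] using hm) hx' hy'
  have hAB_zero : (A : ℤ) + B = 0 :=
    Int.eq_zero_of_dvd_of_nonneg_of_lt (by positivity) (by lia) hAB
  have hB : (B : ℤ) = 0 := by lia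
  exact hε (by simpa only [hB, sub_zero] using hεB)

/-- Let `n, m, e, s ≥ 1` and `q := 2^(e+s-1)`.  There are no nonnegative integers
`A, B, C, D` with `A + B + C + D = q - 1` such that `q` divides `2A + B + C + 2^(e-1)`,
`q` divides `A + nB + mC + 2^(e-1) - n·2^(e-1)`, and `q` divides `C + 2D + 2`. -/
theorem stmt_11 (n m e s : ℕ) (hn : 1 ≤ n) (hm : 1 ≤ m) (he : 1 ≤ e) (hs : 1 ≤ s) :
    ¬ ∃ A B C D : ℕ,
      A + B + C + D = 2 ^ (e + s - 1) - 1 ∧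
      (2 : ℤ) ^ (e + s - 1) ∣ 2 * (A : ℤ) + B + C + 2 ^ (e - 1) ∧
      (2 : ℤ) ^ (e + s - 1) ∣
        (A : ℤ) + n * B + m * C + 2 ^ (e - 1) - n * 2 ^ (e - 1) ∧
      (2 : ℤ) ^ (e + s - 1) ∣ (C : ℤ) + 2 * D + 2 := by
  rintro ⟨A, B, C, D, hsum, hdvd⟩
  have hε : ¬ (2 : ℤ) ^ (e + s - 1) ∣ 2 ^ (e - 1) := by
    rw [pow_dvd_pow_iff two_ne_zero Int.prime_two.not_isUnit]
    lia
  have hsum' : (A : ℤ) + B + C + D = 2 ^ (e + s - 1) - 1 := by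
    zify [Nat.one_le_two_pow (n := e + s - 1)] at hsum
    exact hsum
  exact stmt_11_general hε (isCoprime_pow_mul_sub_one _ _ _) ⟨A, B, C, D, hsum', hdvd⟩
end

section
/- Let n, m, e, h be integers with n ≥ 1, m ≥ 1, e ≥ 1, h ≥ 2, and set q := 2^(e+h-1). Then nonnegative integers A, B, C, D satisfy A + B + C + D = q - 1 together with: q divides 2A + B + C + 2^(e-1), q divides A + nB + mC + 2^(e+h-2) + 2^(e-1) - n·2^(e-1), and q divides C + 2D + 2, if and only if (A, B, C, D) = (2^(e+h-2) - 2^(e-1), 2^(e-1), 0, 2^(e+h-2) - 1). -/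
/-!
Write `q = 2 * r` and `p = 2 ^ (e - 1)`. Both `2 * A + B + C + p` and `C + 2 * D + 2` are positive
multiples of `q`. Given `A + B + C + D = q - 1`, they sum to `2 * q + p - B < 3 * q`, so each
equals `q`. Hence `B = p`, `C = 2 * c` is even and `A = r - p - c`. The remaining condition then
says that `q` divides `q + (2 * m - 1) * c`. As `2 * m - 1` is coprime to `q`, this forces
`q ∣ c`, and `0 ≤ c < q` gives `c = 0`.
-/

theorem eq_and_eq_of_dvd_of_add_lt_three_mul {q x y : ℕ} (hx : 0 < x) (hy : 0 < y)
    (hqx : q ∣ x) (hqy : q ∣ y) (hxy : x + y < 3 * q) : x = q ∧ y = q := by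
  have hx_le : q ≤ x := Nat.le_of_dvd hx hqx
  have hy_le : q ≤ y := Nat.le_of_dvd hy hqy
  exact ⟨Nat.eq_of_dvd_of_lt_two_mul hx.ne' hqx (by lia),
    Nat.eq_of_dvd_of_lt_two_mul hy.ne' hqy (by lia)⟩

theorem sum_eq_and_dvd_and_dvd_iff {q p A B C D : ℕ} (hp : 0 < p) (hpq : p < q) :
    (A + B + C + D = q - 1 ∧ q ∣ 2 * A + B + C + p ∧ q ∣ C + 2 * D + 2) ↔
      (B = p ∧ 2 * A + B + C + p = q ∧ C + 2 * D + 2 = q) := by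
  constructor
  · rintro ⟨hsum, hx, hz⟩
    obtain ⟨hx_eq, hz_eq⟩ : 2 * A + B + C + p = q ∧ C + 2 * D + 2 = q :=
      eq_and_eq_of_dvd_of_add_lt_three_mul (by lia) (by lia) hx hz (by lia)
    exact ⟨by lia, hx_eq, hz_eq⟩
  · rintro ⟨hB, hx, hz⟩
    exact ⟨by lia, hx.symm.dvd, hz.symm.dvd⟩

section CommRing

variable {R : Type*} [CommRing R]

theorem isCoprime_two_mul_sub_one (m : R) : IsCoprime 2 (2 * m - 1) :=
  ⟨m, -1, by ring⟩

theorem two_mul_dvd_add_iff_of_isCoprime {r m A p c : R}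
    (hrm : IsCoprime r (2 * m - 1)) (n : R) (hA : A + p + c = r) :
    2 * r ∣ A + n * p + m * (2 * c) + r + p - n * p ↔ 2 * r ∣ c := by
  have hcoprime : IsCoprime (2 * r) (2 * m - 1) := (isCoprime_two_mul_sub_one m).mul_left hrm
  have hexpr : A + n * p + m * (2 * c) + r + p - n * p = 2 * r + (2 * m - 1) * c := by
    linear_combination hA
  rw [hexpr, dvd_add_right (dvd_refl _)]
  exact ⟨hcoprime.dvd_of_dvd_mul_left, fun hc => hc.mul_left _⟩

end CommRing

theorem stmt_12_general {r p : ℕ} {m : ℤ} (hp : 0 < p) (hpr : p ≤ r)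
    (hrm : IsCoprime (r : ℤ) (2 * m - 1)) (n : ℤ) (A B C D : ℕ) :
    (A + B + C + D = 2 * r - 1 ∧
      (2 * r : ℤ) ∣ 2 * A + B + C + p ∧
      (2 * r : ℤ) ∣ A + n * B + m * C + r + p - n * p ∧
      (2 * r : ℤ) ∣ C + 2 * D + 2) ↔
    (A = r - p ∧ B = p ∧ C = 0 ∧ D = r - 1) := by
  have hsum_iff := sum_eq_and_dvd_and_dvd_iff (q := 2 * r) (A := A) (B := B) (C := C) (D := D)
    hp (by lia)
  zify [show 1 ≤ 2 * r by lia, show 1 ≤ r by lia, hpr] at hsum_iff ⊢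
  constructor
  · rintro ⟨hsum, hx, hy, hz⟩
    obtain ⟨hB, hx_eq, hz_eq⟩ := hsum_iff.mp ⟨hsum, hx, hz⟩
    obtain ⟨c, hC⟩ : ∃ c : ℤ, (C : ℤ) = 2 * c := ⟨r - D - 1, by lia⟩
    rw [hB, hC, two_mul_dvd_add_iff_of_isCoprime hrm n (by lia)] at hy
    have hc : c = 0 := Int.eq_zero_of_dvd_of_nonneg_of_lt (by lia) (by lia) hy
    lia
  · rintro ⟨hA, hB, hC, hD⟩
    obtain ⟨hsum, hx, hz⟩ := hsum_iff.mpr ⟨hB, by lia, by lia⟩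
    have hA_eq : (A : ℤ) + p + 0 = r := by lia
    have hy := (two_mul_dvd_add_iff_of_isCoprime hrm n hA_eq).mpr (dvd_zero _)
    exact ⟨hsum, hx, by simpa [hB, hC] using hy, hz⟩

/-- Let `n, m, e ≥ 1`, `h ≥ 2` and `q := 2^(e+h-1)`.  Nonnegative integers
`A, B, C, D` satisfy `A + B + C + D = q - 1`, `q ∣ 2A + B + C + 2^(e-1)`,
`q ∣ A + nB + mC + 2^(e+h-2) + 2^(e-1) - n·2^(e-1)`, and `q ∣ C + 2D + 2`
if and only if `(A, B, C, D) = (2^(e+h-2) - 2^(e-1), 2^(e-1), 0, 2^(e+h-2) - 1)`. -/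
theorem stmt_12 (n m e h : ℕ) (hn : 1 ≤ n) (hm : 1 ≤ m) (he : 1 ≤ e) (hh : 2 ≤ h)
    (A B C D : ℕ) :
    (A + B + C + D = 2 ^ (e + h - 1) - 1 ∧
      (2 : ℤ) ^ (e + h - 1) ∣ 2 * (A : ℤ) + B + C + 2 ^ (e - 1) ∧
      (2 : ℤ) ^ (e + h - 1) ∣
        (A : ℤ) + n * B + m * C + 2 ^ (e + h - 2) + 2 ^ (e - 1) - n * 2 ^ (e - 1) ∧
      (2 : ℤ) ^ (e + h - 1) ∣ (C : ℤ) + 2 * D + 2) ↔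
    (A = 2 ^ (e + h - 2) - 2 ^ (e - 1) ∧ B = 2 ^ (e - 1) ∧ C = 0 ∧
      D = 2 ^ (e + h - 2) - 1) := by
  have hrm : IsCoprime ((2 ^ (e + h - 2) : ℕ) : ℤ) (2 * m - 1) := by
    push_cast
    exact (isCoprime_two_mul_sub_one (m : ℤ)).pow_left
  have hpr : 2 ^ (e - 1) ≤ 2 ^ (e + h - 2) := Nat.pow_le_pow_right two_pos (by lia)
  rw [show e + h - 1 = (e + h - 2) + 1 by lia, pow_succ', pow_succ']
  exact_mod_cast stmt_12_general (Nat.two_pow_pos (e - 1)) hpr hrm n A B C D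
end

section
/- Let m ≥ 2 be an integer, set h := ⌈log₂ m⌉ + 2, and let n be an integer with n ≥ m and n > 2^(⌈log₂ m⌉). Then the unique quadruple (A, B, C, D) of nonnegative integers satisfying A + B + C + D = 2^(h-1) - 1, 2A + B + C ≤ 2^(h-1) - 1, A + nB + mC ≤ 2^(h-1) - 1, and C + 2D ≤ 2^(h-1) - 1 is (A, B, C, D) = (2^(h-2) - 1, 0, 1, 2^(h-2) - 1). -/
/-!
Put `q = 2 ^ ⌈log₂ m⌉`, so that `m ≤ q < 2m` and all the bounds read `2q - 1 = A + B + C + D`.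
Subtracting this total from the `x`- and `z`-bounds leaves `A ≤ D ≤ A + B`, and subtracting it from
the `y`-bound leaves `(n - 1)B + (m - 1)C ≤ D`. Since `D < q ≤ n - 1`, this forces `B = 0`, hence
`A = D` and `C = 2q - 1 - 2D` is odd. If `C ≥ 3`, then `3(m - 1) ≤ D ≤ q - 2`, contradicting
`q + 1 < 3m`.
-/

theorem pow_clog_lt_mul {b m : ℕ} (hb : 1 < b) (hm : 0 < m) : b ^ Nat.clog b m < b * m := by
  obtain rfl | hm_one : m = 1 ∨ 1 < m := by omega
  · simpa using hb
  · calc b ^ Nat.clog b m = b * b ^ (Nat.clog b m).pred := by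
          rw [← pow_succ', ← Nat.succ_eq_add_one, Nat.succ_pred (Nat.clog_pos hb hm_one).ne']
      _ < b * m := Nat.mul_lt_mul_of_pos_left (Nat.pow_pred_clog_lt_self hb hm_one) (by omega)

section

variable {m n q A B C D : ℕ}

theorem eq_zero_of_mul_add_mul_le (hm : 0 < m) (hD : D + 1 < n)
    (hy : n * B + m * C ≤ B + C + D) : B = 0 := by
  by_contra hB
  have hC_le : C ≤ m * C := Nat.le_mul_of_pos_left C hm
  have hD_le : D ≤ D * B := Nat.le_mul_of_pos_right D (Nat.pos_of_ne_zero hB)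
  have hB_lt : B + D < n * B :=
    calc B + D < D * B + 2 * B := by omega
      _ = (D + 2) * B := (add_mul D 2 B).symm
      _ ≤ n * B := Nat.mul_le_mul_right B hD
  omega

theorem eq_one_of_mul_le (hqm : q + 1 < 3 * m) (hsum : C + 2 * D + 1 = 2 * q)
    (hy : m * C ≤ C + D) : C = 1 := by
  have hC : C < 3 := by
    by_contra! hC
    obtain ⟨c, rfl⟩ := Nat.exists_eq_add_of_le' hC
    have hc : c ≤ m * c := Nat.le_mul_of_pos_left c (by omega)
    rw [mul_add] at hy
    omega
  omega

theorem stmt_13_general (hmq : m ≤ q) (hqm : q + 1 < 3 * m) (hqn : q < n) :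
    (A + B + C + D = 2 * q - 1 ∧
      2 * A + B + C ≤ 2 * q - 1 ∧
      A + n * B + m * C ≤ 2 * q - 1 ∧
      C + 2 * D ≤ 2 * q - 1) ↔
    (A = q - 1 ∧ B = 0 ∧ C = 1 ∧ D = q - 1) := by
  constructor
  · rintro ⟨hsum, hx, hy, hz⟩
    have hD : D + 1 < n := by omega
    have hy' : n * B + m * C ≤ B + C + D := by omega
    obtain rfl : B = 0 := eq_zero_of_mul_add_mul_le (by omega) hD hy'
    obtain rfl : A = D := by omega
    have hsum' : C + 2 * A + 1 = 2 * q := by omega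
    have hC : C = 1 := eq_one_of_mul_le hqm hsum' (by omega)
    omega
  · rintro ⟨rfl, rfl, rfl, rfl⟩
    omega

end

/-- Let `m ≥ 2`, `h := ⌈log₂ m⌉ + 2`, and let `n` be an integer with `n ≥ m` and
`n > 2^(⌈log₂ m⌉)`.  Then the unique quadruple `(A, B, C, D)` of nonnegative
integers with `A + B + C + D = 2^(h-1) - 1`, `2A + B + C ≤ 2^(h-1) - 1`,
`A + nB + mC ≤ 2^(h-1) - 1`, and `C + 2D ≤ 2^(h-1) - 1` is
`(A, B, C, D) = (2^(h-2) - 1, 0, 1, 2^(h-2) - 1)`. -/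
theorem stmt_13 (m : ℕ) (hm : 2 ≤ m) (n : ℕ) (hnm : m ≤ n)
    (hn : 2 ^ (Nat.clog 2 m) < n) (A B C D : ℕ) :
    (A + B + C + D = 2 ^ (Nat.clog 2 m + 2 - 1) - 1 ∧
      2 * A + B + C ≤ 2 ^ (Nat.clog 2 m + 2 - 1) - 1 ∧
      A + n * B + m * C ≤ 2 ^ (Nat.clog 2 m + 2 - 1) - 1 ∧
      C + 2 * D ≤ 2 ^ (Nat.clog 2 m + 2 - 1) - 1) ↔
    (A = 2 ^ (Nat.clog 2 m + 2 - 2) - 1 ∧ B = 0 ∧ C = 1 ∧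
      D = 2 ^ (Nat.clog 2 m + 2 - 2) - 1) := by
  have hq : 2 ^ Nat.clog 2 m < 2 * m := pow_clog_lt_mul one_lt_two (zero_lt_two.trans_le hm)
  simpa [pow_succ'] using stmt_13_general (Nat.le_pow_clog one_lt_two m) (by omega) hn
end

section
/- Let e ≥ 1 be an integer. In the polynomial ring F₂[x, y, z] over the field with two elements, the element (z² + x³ + xy³ + xyz)^(2^e - 1) - (xyz)^(2^e - 1) lies in the ideal generated by x^(2^e), y^(2^e), and z^(2^e). -/
open MvPolynomial

/-!
For a power `q` of `p`, write `I^[q]` for the ideal generated by the `q`-th powers of elements of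
`I`. Suppose `f ^ (p - 1) ≡ u ^ (p - 1)` modulo `I^[p]` and `u ^ (p - 1) * I ≤ I^[p]`. Since
`p * q - 1 = q * (p - 1) + (q - 1)`, taking `q`-th powers of both relations shows that
`f ^ (q - 1) ≡ u ^ (q - 1)` modulo `I^[q]` implies the same statement for `p * q`. For `p = 2`,
`u = x * y * z` and `I = (x, y, z)` it only remains to see `z² + x³ + xy³ ∈ (x², y², z²)`.
-/

section FrobeniusPower

variable {R : Type*} [CommSemiring R] (p : ℕ) [ExpChar R p]

/-- The Frobenius power `I^[p ^ e]` of an ideal `I` in a semiring of exponential characteristic `p`: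
the ideal generated by the `p ^ e`-th powers of the elements of `I`. The argument `e` is the
exponent of `p`, not the power itself. -/
def frobeniusPower (e : ℕ) (I : Ideal R) : Ideal R :=
  I.map (iterateFrobenius R p e)

variable {p}

theorem pow_mem_frobeniusPower {I : Ideal R} {a : R} (ha : a ∈ I) (e : ℕ) :
    a ^ p ^ e ∈ frobeniusPower p e I := by
  rw [← iterateFrobenius_def]
  exact Ideal.mem_map_of_mem _ ha

theorem frobeniusPower_span (e : ℕ) (s : Set R) :
    frobeniusPower p e (Ideal.span s) = Ideal.span ((· ^ p ^ e) '' s) :=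
  Ideal.map_span _ s

theorem frobeniusPower_frobeniusPower (m n : ℕ) (I : Ideal R) :
    frobeniusPower p m (frobeniusPower p n I) = frobeniusPower p (m + n) I := by
  rw [frobeniusPower, frobeniusPower, Ideal.map_map, ← iterateFrobenius_add, frobeniusPower]

theorem pow_mem_colon_frobeniusPower {I J : Ideal R} {r : R} (hr : r ∈ J.colon I) (e : ℕ) :
    r ^ p ^ e ∈ (frobeniusPower p e J).colon (frobeniusPower p e I) := by
  rw [frobeniusPower.eq_def p e I, Ideal.map, Ideal.colon_span, Submodule.mem_colon]
  rintro _ ⟨b, hb, rfl⟩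
  rw [iterateFrobenius_def, smul_eq_mul, ← mul_pow]
  exact pow_mem_frobeniusPower (Submodule.mem_colon.mp hr b hb) e

theorem pow_sub_one_mem_colon_frobeniusPower_span {s : Set R} {u : R} (hu : ∀ a ∈ s, a ∣ u) :
    u ^ (p - 1) ∈ (frobeniusPower p 1 (Ideal.span s)).colon (Ideal.span s) := by
  rw [frobeniusPower_span, pow_one, Ideal.colon_span, Submodule.mem_colon]
  intro a ha
  have hdvd : a ^ p ∣ u ^ (p - 1) * a := by
    rw [← pow_sub_one_mul (expChar_pos R p).ne' a]
    exact mul_dvd_mul_right (pow_dvd_pow_of_dvd (hu a ha) _) a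
  exact Ideal.mem_of_dvd _ hdvd (Ideal.subset_span ⟨a, ha, rfl⟩)

end FrobeniusPower

theorem pow_sub_pow_mem_frobeniusPower {R : Type*} [CommRing R] {p : ℕ} [ExpChar R p]
    {I : Ideal R} {f u : R}
    (hu : u ^ (p - 1) ∈ (frobeniusPower p 1 I).colon I)
    (hfu : f ^ (p - 1) - u ^ (p - 1) ∈ frobeniusPower p 1 I) (e : ℕ) :
    f ^ (p ^ e - 1) - u ^ (p ^ e - 1) ∈ frobeniusPower p e I := by
  induction e with
  | zero => simp
  | succ e ih =>
    have hp : 0 < p := expChar_pos R p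
    have hexp : p ^ (e + 1) - 1 = (p - 1) * p ^ e + (p ^ e - 1) := by
      have : 0 < p ^ e := Nat.pow_pos hp
      have : p ^ e ≤ p * p ^ e := Nat.le_mul_of_pos_left _ hp
      rw [pow_succ', Nat.sub_mul, one_mul]
      omega
    have hpow : (f ^ (p - 1) - u ^ (p - 1)) ^ p ^ e ∈ frobeniusPower p (e + 1) I := by
      rw [← frobeniusPower_frobeniusPower]
      exact pow_mem_frobeniusPower hfu e
    have hcolon : (u ^ (p - 1)) ^ p ^ e * (f ^ (p ^ e - 1) - u ^ (p ^ e - 1)) ∈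
        frobeniusPower p (e + 1) I := by
      rw [← frobeniusPower_frobeniusPower]
      exact Submodule.mem_colon.mp (pow_mem_colon_frobeniusPower hu e) _ ih
    have hsplit : f ^ (p ^ (e + 1) - 1) - u ^ (p ^ (e + 1) - 1) =
        f ^ (p ^ e - 1) * (f ^ (p - 1) - u ^ (p - 1)) ^ p ^ e +
          (u ^ (p - 1)) ^ p ^ e * (f ^ (p ^ e - 1) - u ^ (p ^ e - 1)) := by
      rw [sub_pow_expChar_pow, hexp, pow_add, pow_add, pow_mul, pow_mul]
      ring
    rw [hsplit]
    exact add_mem (Ideal.mul_mem_left _ _ hpow) hcolon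

theorem stmt_14_general {R : Type*} [CommRing R] [CharP R 2] (x y z : R) (e : ℕ) :
    (z ^ 2 + x ^ 3 + x * y ^ 3 + x * y * z) ^ (2 ^ e - 1) - (x * y * z) ^ (2 ^ e - 1) ∈
      Ideal.span {x ^ 2 ^ e, y ^ 2 ^ e, z ^ 2 ^ e} := by
  have hspan (n : ℕ) : frobeniusPower 2 n (Ideal.span {x, y, z}) =
      Ideal.span {x ^ 2 ^ n, y ^ 2 ^ n, z ^ 2 ^ n} := by
    simp only [frobeniusPower_span, Set.image_insert_eq, Set.image_singleton]
  have hu : (x * y * z) ^ (2 - 1) ∈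
      (frobeniusPower 2 1 (Ideal.span {x, y, z})).colon (Ideal.span {x, y, z}) := by
    apply pow_sub_one_mem_colon_frobeniusPower_span
    rintro a (rfl | rfl | rfl)
    exacts [⟨y * z, by ring⟩, ⟨x * z, by ring⟩, ⟨x * y, by ring⟩]
  have hfu : (z ^ 2 + x ^ 3 + x * y ^ 3 + x * y * z) ^ (2 - 1) - (x * y * z) ^ (2 - 1) ∈
      frobeniusPower 2 1 (Ideal.span {x, y, z}) := by
    rw [hspan, Submodule.mem_span_triple]
    exact ⟨x, x * y, 1, by simp only [smul_eq_mul]; ring⟩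
  rw [← hspan]
  exact pow_sub_pow_mem_frobeniusPower hu hfu e

/-- For `e ≥ 1`, in `F₂[x, y, z]` the element
`(z² + x³ + xy³ + xyz)^(2^e - 1) - (xyz)^(2^e - 1)` lies in the ideal
`(x^(2^e), y^(2^e), z^(2^e))`. -/
theorem stmt_14 (e : ℕ) (he : 1 ≤ e) :
    ((X 2 ^ 2 + X 0 ^ 3 + X 0 * X 1 ^ 3 + X 0 * X 1 * X 2 :
        MvPolynomial (Fin 3) (ZMod 2)) ^ (2 ^ e - 1)
      - (X 0 * X 1 * X 2) ^ (2 ^ e - 1)) ∈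
    Ideal.span ({X 0 ^ 2 ^ e, X 1 ^ 2 ^ e, X 2 ^ 2 ^ e} :
      Set (MvPolynomial (Fin 3) (ZMod 2))) :=
  stmt_14_general (X 0) (X 1) (X 2) e
end

section
/- Let e ≥ 1 be an integer. In the polynomial ring (ℤ/4ℤ)[x, y, z], the element (z² + x³ + xy³ + xyz)^(2^(e+1) - 1) - (xyz)^(2^(e+1) - 1) lies in the ideal generated by x^(2^(e+1)), y^(2^(e+1)), and z^(2^(e+1)). -/
open MvPolynomial

/-!
Write `f = w + u` with `u = xyz` and `w = z² + x³ + xy³`. A term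
`(z²)^a (x³)^b (xy³)^c u^d` with `a + b + c + d = N` and `m = a + b + c > 0` that is not divisible
by `x^(N+1)`, `y^(N+1)` or `z^(N+1)` satisfies `2b ≤ a`, `2c ≤ a + b` and `a ≤ b + c`, hence
`a ≤ m/2`, `b ≤ m/4` and `c ≤ m/3`. If `q` is one of the two highest powers of `2` with `q ≤ m`,
then `M = ⌊m/q⌋` is `1`, `2` or `3`, so
`⌊a/q⌋ + ⌊b/q⌋ + ⌊c/q⌋ ≤ ⌊M/2⌋ + ⌊M/4⌋ + ⌊M/3⌋ < M`. By Legendre's formula each such `q`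
contributes a factor `2` to the trinomial coefficient of this term in `w^m`, which is therefore
divisible by `4`.
-/

section Multinomial

variable {ι : Type*} (s : Finset ι) (f : ι → ℕ)

lemma sum_div_le_div_sum (q : ℕ) : ∑ j ∈ s, f j / q ≤ (∑ j ∈ s, f j) / q := by
  rcases q.eq_zero_or_pos with rfl | hq
  · simp
  · rw [Nat.le_div_iff_mul_le hq, Finset.sum_mul]
    exact Finset.sum_le_sum fun j _ => Nat.div_mul_le_self (f j) q

variable {s f} {p : ℕ}

lemma factorization_multinomial (hp : p.Prime) {b : ℕ} (hb : Nat.log p (∑ j ∈ s, f j) < b) :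
    (Nat.multinomial s f).factorization p =
      ∑ i ∈ Finset.Ico 1 b, ((∑ j ∈ s, f j) / p ^ i - ∑ j ∈ s, f j / p ^ i) := by
  have legendre : ∀ j ∈ s, (f j).factorial.factorization p = ∑ i ∈ Finset.Ico 1 b, f j / p ^ i :=
    fun j hj => Nat.factorization_factorial hp <|
      (Nat.log_mono_right (Finset.single_le_sum_of_canonicallyOrdered hj)).trans_lt hb
  rw [Finset.sum_tsub_distrib _ fun i _ => sum_div_le_div_sum s f (p ^ i), Finset.sum_comm,
    ← Finset.sum_congr rfl legendre, ← Nat.factorization_factorial hp hb, ← Nat.multinomial_spec,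
    Nat.factorization_mul (Finset.prod_ne_zero_iff.2 fun j _ => (f j).factorial_ne_zero)
      (Nat.multinomial_pos s f).ne', Finsupp.add_apply,
    Nat.factorization_prod_apply fun j _ => (f j).factorial_ne_zero, Nat.add_sub_cancel_left]

lemma pow_card_dvd_multinomial (hp : p.Prime) {L : Finset ℕ}
    (hL : ∀ i ∈ L, ∑ j ∈ s, f j / p ^ i < (∑ j ∈ s, f j) / p ^ i) :
    p ^ L.card ∣ Nat.multinomial s f := by
  have hsub : L ⊆ Finset.Ico 1 (Nat.log p (∑ j ∈ s, f j) + 1) := fun i hi => by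
    have hne : i ≠ 0 := by
      rintro rfl
      simpa using hL 0 hi
    have hlog : i ≤ Nat.log p (∑ j ∈ s, f j) :=
      Nat.le_log_of_pow_le hp.one_lt <| (Nat.div_pos_iff.1 (Nat.zero_lt_of_lt (hL i hi))).2
    exact Finset.mem_Ico.2 ⟨Nat.one_le_iff_ne_zero.2 hne, Nat.lt_succ_of_le hlog⟩
  rw [hp.pow_dvd_iff_le_factorization (Nat.multinomial_pos s f).ne',
    factorization_multinomial hp (Nat.lt_succ_self _)]
  calc
    L.card = ∑ _i ∈ L, 1 := Finset.card_eq_sum_ones L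
    _ ≤ ∑ i ∈ L, ((∑ j ∈ s, f j) / p ^ i - ∑ j ∈ s, f j / p ^ i) :=
      Finset.sum_le_sum fun i hi => Nat.sub_pos_of_lt (hL i hi)
    _ ≤ _ := Finset.sum_le_sum_of_subset hsub

end Multinomial

lemma div_add_div_add_div_lt {a b c q : ℕ} (ha : 2 * a ≤ a + b + c) (hb : 4 * b ≤ a + b + c)
    (hc : 3 * c ≤ a + b + c) (hle : q ≤ a + b + c) (hlt : a + b + c < 4 * q) :
    a / q + b / q + c / q < (a + b + c) / q := by
  have mul_div_le : ∀ {t k : ℕ}, t * k ≤ a + b + c → t * (k / q) ≤ (a + b + c) / q :=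
    fun h => (Nat.mul_div_le_mul_div_assoc _ _ _).trans (Nat.div_le_div_right h)
  have hq : 0 < q := by omega
  have hpos : 0 < (a + b + c) / q := Nat.div_pos hle hq
  have hlt_four : (a + b + c) / q < 4 := Nat.div_lt_of_lt_mul (by rwa [mul_comm])
  have ha' := mul_div_le ha
  have hb' := mul_div_le hb
  have hc' := mul_div_le hc
  omega

lemma four_dvd_multinomial {a b c : ℕ} (hpos : 0 < a + b + c) (ha : 2 * a ≤ a + b + c)
    (hb : 4 * b ≤ a + b + c) (hc : 3 * c ≤ a + b + c) :
    4 ∣ Nat.multinomial Finset.univ ![a, b, c] := by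
  obtain ⟨k, hk⟩ : ∃ k, Nat.log 2 (a + b + c) = k + 1 :=
    Nat.exists_eq_add_one.2 (Nat.log_pos one_lt_two (by omega))
  have hlow : 2 * 2 ^ k ≤ a + b + c := by
    simpa only [hk, pow_succ'] using Nat.pow_log_le_self 2 hpos.ne'
  have hhigh : a + b + c < 2 * (2 * 2 ^ k) := by
    simpa only [hk, pow_succ'] using Nat.lt_pow_succ_log_self one_lt_two (a + b + c)
  have hcarry : ∀ i ∈ ({k, k + 1} : Finset ℕ),
      ∑ j, ![a, b, c] j / 2 ^ i < (∑ j, ![a, b, c] j) / 2 ^ i := by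
    intro i hi
    have hi' : i = k ∨ i = k + 1 := by simpa using hi
    have hbounds : 2 ^ i ≤ a + b + c ∧ a + b + c < 4 * 2 ^ i := by
      rcases hi' with rfl | rfl <;> grind
    simpa [Fin.sum_univ_three] using div_add_div_add_div_lt ha hb hc hbounds.1 hbounds.2
  simpa using pow_card_dvd_multinomial Nat.prime_two hcarry

section IdealMembership

variable {R : Type*} [CommRing R] {I : Ideal R} {x y z : R} {N : ℕ}

lemma add_pow_sub_pow_mem {w u : R}
    (h : ∀ m d, m + d = N → 0 < m → w ^ m * u ^ d ∈ I) : (w + u) ^ N - u ^ N ∈ I := by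
  rw [add_pow, Finset.sum_range_succ', pow_zero, Nat.choose_zero_right, Nat.sub_zero, one_mul,
    Nat.cast_one, mul_one, add_sub_cancel_right]
  refine I.sum_mem fun m hm => I.mul_mem_right _ (h _ _ ?_ m.succ_pos)
  rw [Finset.mem_range] at hm
  omega

lemma trinomial_term_mul_pow_mem (hx : x ^ (N + 1) ∈ I) (hy : y ^ (N + 1) ∈ I)
    (hz : z ^ (N + 1) ∈ I) (h4 : (4 : R) ∈ I) {a b c d : ℕ} (hN : a + b + c + d = N)
    (hpos : 0 < a + b + c) :
    (Nat.multinomial Finset.univ ![a, b, c] : R) * ((z ^ 2) ^ a * (x ^ 3) ^ b * (x * y ^ 3) ^ c) *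
      (x * y * z) ^ d ∈ I := by
  have collect : (Nat.multinomial Finset.univ ![a, b, c] : R) *
      ((z ^ 2) ^ a * (x ^ 3) ^ b * (x * y ^ 3) ^ c) * (x * y * z) ^ d =
      Nat.multinomial Finset.univ ![a, b, c] *
        (x ^ (3 * b + c + d) * y ^ (3 * c + d) * z ^ (2 * a + d)) := by
    ring
  rw [collect]
  by_cases hxdeg : N + 1 ≤ 3 * b + c + d
  · exact I.mul_mem_left _ (I.mul_mem_right _ (I.mul_mem_right _
      (I.pow_mem_of_pow_mem hx hxdeg)))
  by_cases hydeg : N + 1 ≤ 3 * c + d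
  · exact I.mul_mem_left _ (I.mul_mem_right _ (I.mul_mem_left _
      (I.pow_mem_of_pow_mem hy hydeg)))
  by_cases hzdeg : N + 1 ≤ 2 * a + d
  · exact I.mul_mem_left _ (I.mul_mem_left _ (I.pow_mem_of_pow_mem hz hzdeg))
  have hdvd : 4 ∣ Nat.multinomial Finset.univ ![a, b, c] :=
    four_dvd_multinomial hpos (by omega) (by omega) (by omega)
  exact I.mul_mem_right _ (I.mem_of_dvd (mod_cast Nat.cast_dvd_cast hdvd) h4)

theorem stmt_15_general (hx : x ^ (N + 1) ∈ I) (hy : y ^ (N + 1) ∈ I) (hz : z ^ (N + 1) ∈ I)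
    (h4 : (4 : R) ∈ I) :
    (z ^ 2 + x ^ 3 + x * y ^ 3 + x * y * z) ^ N - (x * y * z) ^ N ∈ I := by
  refine add_pow_sub_pow_mem fun m d hN hm => ?_
  have hw : z ^ 2 + x ^ 3 + x * y ^ 3 = ∑ i, ![z ^ 2, x ^ 3, x * y ^ 3] i := by
    simp [Fin.sum_univ_three]
  rw [hw, Finset.sum_pow_eq_sum_piAntidiag, Finset.sum_mul]
  refine I.sum_mem fun k hk => ?_
  have hsum : k 0 + k 1 + k 2 = m := by
    simpa [Fin.sum_univ_three] using hk
  have hk_eta : k = ![k 0, k 1, k 2] := (FinVec.etaExpand_eq k).symm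
  rw [hk_eta]
  simpa [Fin.prod_univ_three] using
    trinomial_term_mul_pow_mem hx hy hz h4 (hsum.symm ▸ hN) (hsum.symm ▸ hm)

end IdealMembership

/-- For `e ≥ 1`, in `(ℤ/4ℤ)[x, y, z]` the element
`(z² + x³ + xy³ + xyz)^(2^(e+1) - 1) - (xyz)^(2^(e+1) - 1)` lies in the ideal
`(x^(2^(e+1)), y^(2^(e+1)), z^(2^(e+1)))`. -/
theorem stmt_15 (e : ℕ) (he : 1 ≤ e) :
    ((X 2 ^ 2 + X 0 ^ 3 + X 0 * X 1 ^ 3 + X 0 * X 1 * X 2 :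
        MvPolynomial (Fin 3) (ZMod 4)) ^ (2 ^ (e + 1) - 1)
      - (X 0 * X 1 * X 2) ^ (2 ^ (e + 1) - 1)) ∈
    Ideal.span ({X 0 ^ 2 ^ (e + 1), X 1 ^ 2 ^ (e + 1), X 2 ^ 2 ^ (e + 1)} :
      Set (MvPolynomial (Fin 3) (ZMod 4))) := by
  have hq : 2 ^ (e + 1) - 1 + 1 = 2 ^ (e + 1) := Nat.sub_add_cancel Nat.one_le_two_pow
  have h4 : (4 : MvPolynomial (Fin 3) (ZMod 4)) = 0 := CharP.ofNat_eq_zero _ 4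
  apply stmt_15_general
  case h4 => exact h4 ▸ Ideal.zero_mem _
  all_goals exact Ideal.subset_span (by simp [hq])
end

section
/- Let e ≥ 1 be an integer. In the polynomial ring F₂[x, y, z] over the field with two elements, the element ((x³z²)^(2^(e-1)) + (xy³z²)^(2^(e-1)) + (xyz³)^(2^(e-1))) · (z² + x³ + xy³ + xyz)^(2^(e-1)) lies in the ideal generated by x^(2^(e+1)), y^(2^(e+1)), and z^(2^(e+1)). -/
/-!
Write `f = z² + x³ + xy³ + xyz`. The monomials `x³z²`, `xy³z²`, `xyz³` are those products of two
distinct terms of `f` that survive modulo `(x⁴, y⁴)`. Multiplying their sum by `f` once more yields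
only monomials divisible by `x⁴`, `y⁴` or `z⁴`, in any characteristic. In characteristic `p`, the
`n`-fold Frobenius is a ring homomorphism carrying this membership to its `p ^ n`-th power.
-/

open MvPolynomial

theorem pow_expChar_pow_mem_span_image {R : Type*} [CommSemiring R] (p : ℕ) [ExpChar R p]
    (n : ℕ) {S : Set R} {a : R} (ha : a ∈ Ideal.span S) :
    a ^ p ^ n ∈ Ideal.span ((· ^ p ^ n) '' S) := by
  have h := Ideal.mem_map_of_mem (iterateFrobenius R p n) ha
  rwa [Ideal.map_span] at h

theorem cross_terms_mul_mem_span_pow_four {R : Type*} [CommSemiring R] (x y z : R) :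
    (x ^ 3 * z ^ 2 + x * y ^ 3 * z ^ 2 + x * y * z ^ 3) *
        (z ^ 2 + x ^ 3 + x * y ^ 3 + x * y * z) ∈
      Ideal.span {x ^ 4, y ^ 4, z ^ 4} := by
  refine Submodule.mem_span_triple.mpr
    ⟨x ^ 2 * z ^ 2 + 2 * y ^ 3 * z ^ 2 + 2 * y * z ^ 3,
      x ^ 2 * y ^ 2 * z ^ 2 + 2 * x ^ 2 * z ^ 3,
      x ^ 3 + x * y ^ 3 + x * y * z + x ^ 2 * y ^ 2, ?_⟩
  simp only [smul_eq_mul]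
  ring

theorem stmt_16_general {R : Type*} [CommSemiring R] (p : ℕ) [ExpChar R p] (n : ℕ) (x y z : R) :
    ((x ^ 3 * z ^ 2) ^ p ^ n + (x * y ^ 3 * z ^ 2) ^ p ^ n + (x * y * z ^ 3) ^ p ^ n) *
        (z ^ 2 + x ^ 3 + x * y ^ 3 + x * y * z) ^ p ^ n ∈
      Ideal.span {x ^ (4 * p ^ n), y ^ (4 * p ^ n), z ^ (4 * p ^ n)} := by
  have h := pow_expChar_pow_mem_span_image p n (cross_terms_mul_mem_span_pow_four x y z)
  rw [mul_pow, add_pow_expChar_pow, add_pow_expChar_pow] at h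
  simpa only [Set.image_insert_eq, Set.image_singleton, ← pow_mul] using h

/-- For `e ≥ 1`, in `F₂[x, y, z]` the element
`((x³z²)^(2^(e-1)) + (xy³z²)^(2^(e-1)) + (xyz³)^(2^(e-1))) · (z² + x³ + xy³ + xyz)^(2^(e-1))`
lies in the ideal `(x^(2^(e+1)), y^(2^(e+1)), z^(2^(e+1)))`. -/
theorem stmt_16 (e : ℕ) (he : 1 ≤ e) :
    (((X 0 ^ 3 * X 2 ^ 2) ^ 2 ^ (e - 1) + (X 0 * X 1 ^ 3 * X 2 ^ 2) ^ 2 ^ (e - 1)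
        + (X 0 * X 1 * X 2 ^ 3) ^ 2 ^ (e - 1)) *
      (X 2 ^ 2 + X 0 ^ 3 + X 0 * X 1 ^ 3 + X 0 * X 1 * X 2 :
        MvPolynomial (Fin 3) (ZMod 2)) ^ 2 ^ (e - 1)) ∈
    Ideal.span ({X 0 ^ 2 ^ (e + 1), X 1 ^ 2 ^ (e + 1), X 2 ^ 2 ^ (e + 1)} :
      Set (MvPolynomial (Fin 3) (ZMod 2))) := by
  obtain ⟨n, rfl⟩ := Nat.exists_eq_add_of_le' he
  rw [Nat.add_sub_cancel, show 2 ^ (n + 1 + 1) = 4 * 2 ^ n by ring]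
  exact stmt_16_general 2 n (X 0) (X 1) (X 2)
end
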